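/- For the complete elliptic integrals of the first and second kind, the inequality $1 - \gamma^2 < \frac{E(\gamma)}{K(\gamma)} < 1 - \frac{\gamma^2}{2}$ holds for all $\gamma \in (0,1)$. -/

import Mathlib

open Real Set

/-- Complete elliptic integral of the first kind. -/
noncomputable def ellK (γ : ℝ) : ℝ :=
  ∫ t in (0:ℝ)..1, 1 / Real.sqrt ((1 - t^2) * (1 - γ^2 * t^2))

/-- Complete elliptic integral of the second kind. -/
noncomputable def ellE (γ : ℝ) : ℝ :=
  ∫ t in (0:ℝ)..1, Real.sqrt (1 - γ^2 * t^2) / Real.sqrt (1 - t^2)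

lemma w_int : IntervalIntegrable (fun t : ℝ => 1 / Real.sqrt (1 - t^2)) MeasureTheory.volume 0 1 := by
  rw [intervalIntegrable_iff_integrableOn_Ioc_of_le zero_le_one]
  refine intervalIntegral.integrableOn_deriv_of_nonneg (g := Real.arcsin)
    Real.continuous_arcsin.continuousOn ?_ ?_
  · intro x hx
    exact Real.hasDerivAt_arcsin (by linarith [hx.1]) (by linarith [hx.2])
  · intro x _
    positivity

lemma mul_w_int {f : ℝ → ℝ} (hf : ContinuousOn f (Icc 0 1)) :
    IntervalIntegrable (fun t : ℝ => f t * (1 / Real.sqrt (1 - t^2))) MeasureTheory.volume 0 1 :=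
  w_int.continuousOn_mul (by rwa [uIcc_of_le zero_le_one])

lemma w_pos {t : ℝ} (h0 : 0 < t) (h1 : t < 1) : 0 < 1 / Real.sqrt (1 - t^2) := by
  have : 0 < 1 - t^2 := by nlinarith
  positivity

lemma zero_int : ∫ t in (0:ℝ)..1, (t^2 - 1/2) * (1 / Real.sqrt (1 - t^2)) = 0 := by
  rw [intervalIntegral.integral_eq_sub_of_hasDerivAt_of_le zero_le_one
    (f := fun t : ℝ => -(1/2) * (t * Real.sqrt (1 - t^2)))]
  · simp
  · fun_prop
  · intro x hx
    have h : 0 < 1 - x^2 := by nlinarith [hx.1, hx.2]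
    have hs := Real.sqrt_pos.2 h
    have h2 : HasDerivAt (fun t : ℝ => 1 - t^2) (-(2*x)) x := by
      simpa using (hasDerivAt_pow 2 x).const_sub 1
    have := ((hasDerivAt_id x).mul (h2.sqrt h.ne')).const_mul (-(1/2))
    refine HasDerivAt.congr_deriv this ?_
    simp only [id]
    field_simp
    rw [Real.sq_sqrt h.le]
    ring
  · exact mul_w_int (by fun_prop)

/-- For all `γ ∈ (0,1)`, `1 - γ² < E(γ)/K(γ) < 1 - γ²/2`. -/
theorem ellE_div_ellK_bounds (γ : ℝ) (hγ : γ ∈ Set.Ioo (0:ℝ) 1) :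
    1 - γ^2 < ellE γ / ellK γ ∧ ellE γ / ellK γ < 1 - γ^2 / 2 := by
  obtain ⟨hγ0, hγ1⟩ := hγ
  have hp : ∀ t ∈ Icc (0:ℝ) 1, 0 < 1 - γ^2 * t^2 := by
    intro t ht
    have h1 : t^2 ≤ 1 := by nlinarith [ht.1, ht.2]
    have h2 : γ^2 < 1 := by nlinarith
    nlinarith [sq_nonneg γ, sq_nonneg t]
  set w : ℝ → ℝ := fun t => 1 / Real.sqrt (1 - t^2) with hw
  set g : ℝ → ℝ := fun t => 1 / Real.sqrt (1 - γ^2 * t^2) with hg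
  have gpos : ∀ t ∈ Icc (0:ℝ) 1, 0 < g t := by
    intro t ht
    have := hp t ht
    simp only [hg]; positivity
  have gc : ContinuousOn g (Icc 0 1) := by
    refine ContinuousOn.div continuousOn_const (by fun_prop) ?_
    intro t ht
    exact (Real.sqrt_pos.2 (hp t ht)).ne'
  have gmono : ∀ a ∈ Icc (0:ℝ) 1, ∀ b ∈ Icc (0:ℝ) 1, a < b → g a < g b := by
    intro a ha b hb hab
    have := hp b hb
    refine one_div_lt_one_div_of_lt (Real.sqrt_pos.2 this) (Real.sqrt_lt_sqrt this.le ?_)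
    have : a^2 < b^2 := by nlinarith [ha.1]
    have : 0 < γ^2 := by positivity
    nlinarith
  have i1 : IntervalIntegrable (fun t => g t * w t) MeasureTheory.volume 0 1 := mul_w_int gc
  have i2 : IntervalIntegrable (fun t => (t^2 * g t) * w t) MeasureTheory.volume 0 1 :=
    mul_w_int (by fun_prop)
  have eK : ellK γ = ∫ t in (0:ℝ)..1, g t * w t := by
    refine intervalIntegral.integral_congr fun t ht => ?_
    rw [uIcc_of_le zero_le_one] at ht
    have h : 0 ≤ 1 - t^2 := by nlinarith [ht.1, ht.2]
    simp only [hg, hw]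
    rw [Real.sqrt_mul h, one_div_mul_one_div, mul_comm]
  have eE : ellE γ = ellK γ - γ^2 * ∫ t in (0:ℝ)..1, (t^2 * g t) * w t := by
    rw [eK, ← intervalIntegral.integral_const_mul,
      ← intervalIntegral.integral_sub i1 (i2.const_mul _)]
    refine intervalIntegral.integral_congr fun t ht => ?_
    rw [uIcc_of_le zero_le_one] at ht
    have h := hp t ht
    have hs := Real.sqrt_pos.2 h
    have : Real.sqrt (1 - γ^2 * t^2) = (1 - γ^2 * t^2) * g t := by
      simp only [hg]
      field_simp
      exact Real.sq_sqrt h.le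
    change Real.sqrt (1 - γ^2 * t^2) / Real.sqrt (1 - t^2) = _
    rw [this]
    simp only [hw]
    ring
  set J := ∫ t in (0:ℝ)..1, (t^2 * g t) * w t with hJ
  have Kpos : 0 < ellK γ := by
    rw [eK]
    refine intervalIntegral.intervalIntegral_pos_of_pos_on i1 ?_ zero_lt_one
    intro t ht
    exact mul_pos (gpos t ⟨ht.1.le, ht.2.le⟩) (w_pos ht.1 ht.2)
  have JK : 0 < ellK γ - J := by
    rw [eK, hJ, ← intervalIntegral.integral_sub i1 i2]
    refine intervalIntegral.intervalIntegral_pos_of_pos_on (i1.sub i2) ?_ zero_lt_one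
    intro t ht
    have h1 := mul_pos (gpos t ⟨ht.1.le, ht.2.le⟩) (w_pos ht.1 ht.2)
    have h2 : 0 < 1 - t^2 := by nlinarith [ht.1, ht.2]
    have := mul_pos h2 h1
    simp only [hw] at *
    linarith
  have KJ : 0 < J - 1/2 * ellK γ := by
    set s := Real.sqrt (1/2) with hs
    have s2 : s^2 = 1/2 := Real.sq_sqrt (by norm_num)
    have s0 : 0 < s := Real.sqrt_pos.2 (by norm_num)
    have s1 : s < 1 := by nlinarith
    have i3 : IntervalIntegrable (fun t => ((t^2 - 1/2) * (g t - g s)) * w t)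
      MeasureTheory.volume 0 1 := mul_w_int (by fun_prop)
    have i4 : IntervalIntegrable (fun t => (t^2 - 1/2) * w t)
      MeasureTheory.volume 0 1 := mul_w_int (by fun_prop)
    have e : J - 1/2 * ellK γ = ∫ t in (0:ℝ)..1, ((t^2 - 1/2) * (g t - g s)) * w t := by
      have z : ∫ t in (0:ℝ)..1, (t^2 - 1/2) * w t = 0 := zero_int
      have : J - 1/2 * ellK γ = J - 1/2 * ellK γ - g s * ∫ t in (0:ℝ)..1, (t^2 - 1/2) * w t := by
        rw [z]; ring
      rw [this, eK, hJ, ← intervalIntegral.integral_const_mul, ← intervalIntegral.integral_const_mul,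
        ← intervalIntegral.integral_sub i2 (i1.const_mul _),
        ← intervalIntegral.integral_sub (i2.sub (i1.const_mul _)) (i4.const_mul _)]
      refine intervalIntegral.integral_congr fun t _ => ?_
      ring
    have ia := i3.mono_set (c := 0) (d := s) (by
      rw [uIcc_of_le s0.le, uIcc_of_le zero_le_one]; exact Icc_subset_Icc le_rfl s1.le)
    have ib := i3.mono_set (c := s) (d := 1) (by
      rw [uIcc_of_le s1.le, uIcc_of_le zero_le_one]; exact Icc_subset_Icc s0.le le_rfl)
    rw [e, ← intervalIntegral.integral_add_adjacent_intervals ia ib]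
    refine add_pos (intervalIntegral.intervalIntegral_pos_of_pos_on ia ?_ s0)
      (intervalIntegral.intervalIntegral_pos_of_pos_on ib ?_ s1)
    · intro t ht
      refine mul_pos (mul_pos_of_neg_of_neg ?_ ?_) (w_pos ht.1 (ht.2.trans s1))
      · nlinarith [ht.1, ht.2]
      · exact sub_neg.2 (gmono _ ⟨ht.1.le, (ht.2.trans s1).le⟩ _ ⟨s0.le, s1.le⟩ ht.2)
    · intro t ht
      refine mul_pos (mul_pos ?_ ?_) (w_pos (s0.trans ht.1) ht.2)
      · nlinarith [ht.1, ht.2]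
      · exact sub_pos.2 (gmono _ ⟨s0.le, s1.le⟩ _ ⟨(s0.trans ht.1).le, ht.2.le⟩ ht.1)
  have g2 : 0 < γ^2 := by positivity
  rw [lt_div_iff₀ Kpos, div_lt_iff₀ Kpos, eE]
  constructor <;> nlinarith [mul_pos g2 JK, mul_pos g2 KJ]
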